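/- In the calculus λ_S, Turing's call-by-value fixed-point combinator Θ and Curry's call-by-value fixed-point combinator Δ are contextually equivalent in the relaxed semantics: Θ ≈ Δ. -/

import Mathlib

namespace LambdaS

/-- Terms of the calculus λ_S: variables, λ-abstractions, applications,
the shift operator `S k.t`, and the reset delimiter `⟨t⟩`. -/
inductive Tm : Type
  | var : ℕ → Tm
  | lam : ℕ → Tm → Tm
  | app : Tm → Tm → Tm
  | shift : ℕ → Tm → Tm
  | reset : Tm → Tm
  deriving DecidableEq

/-- A variable fresh for a finite set of variables. -/
def fresh (s : Finset ℕ) : ℕ := if h : s.Nonempty then s.max' h + 1 else 0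

namespace Tm

/-- Free variables. -/
def fv : Tm → Finset ℕ
  | var x => {x}
  | lam x t => fv t \ {x}
  | app t u => fv t ∪ fv u
  | shift k t => fv t \ {k}
  | reset t => fv t

def size : Tm → ℕ
  | var _ => 1
  | lam _ t => size t + 1
  | app t u => size t + size u + 1
  | shift _ t => size t + 1
  | reset t => size t + 1

/-- Renaming of free occurrences of a variable (used for α-renaming with a
fresh target variable). -/
def rename : Tm → ℕ → ℕ → Tm
  | var w, y, z => if w = y then var z else var w
  | lam w t, y, z => if w = y then lam w t else lam w (rename t y z)
  | app t u, y, z => app (rename t y z) (rename u y z)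
  | shift w t, y, z => if w = y then shift w t else shift w (rename t y z)
  | reset t, y, z => reset (rename t y z)

theorem size_rename (t : Tm) (y z : ℕ) : size (rename t y z) = size t := by
  induction t generalizing y z with
  | var w => simp only [rename]; split <;> rfl
  | lam w t ih => simp only [rename]; split <;> simp [size, ih]
  | app t u iht ihu => simp [rename, size, iht, ihu]
  | shift w t ih => simp only [rename]; split <;> simp [size, ih]
  | reset t ih => simp [rename, size, ih]

/-- Capture-avoiding substitution `t{v/x}` of `v` for the free occurrences of
`x` in `t`; bound variables are α-renamed when needed. -/
def subst : Tm → ℕ → Tm → Tm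
  | var w, x, v => if w = x then v else var w
  | lam y t, x, v =>
      if y = x then lam y t
      else if y ∈ fv v then
        lam (fresh (fv v ∪ fv t ∪ {x}))
          (subst (rename t y (fresh (fv v ∪ fv t ∪ {x}))) x v)
      else lam y (subst t x v)
  | app t u, x, v => app (subst t x v) (subst u x v)
  | shift y t, x, v =>
      if y = x then shift y t
      else if y ∈ fv v then
        shift (fresh (fv v ∪ fv t ∪ {x}))
          (subst (rename t y (fresh (fv v ∪ fv t ∪ {x}))) x v)
      else shift y (subst t x v)
  | reset t, x, v => reset (subst t x v)
termination_by t _ _ => size t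
decreasing_by all_goals simp [size_rename, size] <;> omega

end Tm

/-- Values: variables and λ-abstractions. -/
inductive IsValue : Tm → Prop
  | var (x : ℕ) : IsValue (Tm.var x)
  | lam (x : ℕ) (t : Tm) : IsValue (Tm.lam x t)

/-- A term is closed if it has no free variables. -/
def Closed (t : Tm) : Prop := t.fv = ∅

/-- Pure evaluation contexts E ::= □ | v E | E t. -/
inductive ECtx : Type
  | hole : ECtx
  | appR : (v : Tm) → IsValue v → ECtx → ECtx
  | appL : ECtx → Tm → ECtx

def ECtx.plug : ECtx → Tm → Tm
  | .hole, t => t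
  | .appR v _ E, t => Tm.app v (E.plug t)
  | .appL E u, t => Tm.app (E.plug t) u

def ECtx.fv : ECtx → Finset ℕ
  | .hole => ∅
  | .appR v _ E => v.fv ∪ E.fv
  | .appL E u => E.fv ∪ u.fv

/-- Composition of pure contexts: `(E.comp E').plug t = E.plug (E'.plug t)`. -/
def ECtx.comp : ECtx → ECtx → ECtx
  | .hole, E' => E'
  | .appR v hv E, E' => .appR v hv (E.comp E')
  | .appL E u, E' => .appL (E.comp E') u

/-- Evaluation contexts F ::= □ | v F | F t | ⟨F⟩. -/
inductive FCtx : Type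
  | hole : FCtx
  | appR : (v : Tm) → IsValue v → FCtx → FCtx
  | appL : FCtx → Tm → FCtx
  | reset : FCtx → FCtx

def FCtx.plug : FCtx → Tm → Tm
  | .hole, t => t
  | .appR v _ F, t => Tm.app v (F.plug t)
  | .appL F u, t => Tm.app (F.plug t) u
  | .reset F, t => Tm.reset (F.plug t)

def FCtx.fv : FCtx → Finset ℕ
  | .hole => ∅
  | .appR v _ F => v.fv ∪ F.fv
  | .appL F u => F.fv ∪ u.fv
  | .reset F => F.fv

/-- The function `λx.⟨E[x]⟩` representing the captured delimited context `E`,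
where `x` is chosen fresh (in particular `x ∉ fv E`). -/
def contFun (E : ECtx) : Tm :=
  Tm.lam (fresh E.fv) (Tm.reset (E.plug (Tm.var (fresh E.fv))))

/-- Call-by-value reduction →_v of λ_S. -/
inductive Red : Tm → Tm → Prop
  | beta (F : FCtx) (x : ℕ) (t v : Tm) :
      IsValue v →
      Red (F.plug (Tm.app (Tm.lam x t) v)) (F.plug (t.subst x v))
  | capture (F : FCtx) (E : ECtx) (k : ℕ) (t : Tm) :
      Red (F.plug (Tm.reset (E.plug (Tm.shift k t))))
          (F.plug (Tm.reset (t.subst k (contFun E))))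
  | resetVal (F : FCtx) (v : Tm) :
      IsValue v →
      Red (F.plug (Tm.reset v)) (F.plug v)

/-- A stuck term: not a value and unable to reduce. -/
def Stuck (t : Tm) : Prop := ¬ IsValue t ∧ ∀ t', ¬ Red t t'

/-- Normal forms: values and stuck terms. -/
def NormalForm (t : Tm) : Prop := IsValue t ∨ Stuck t

/-- A control-stuck term has the form E[S k.t]. -/
def ControlStuck (t : Tm) : Prop :=
  ∃ (E : ECtx) (k : ℕ) (s : Tm), t = E.plug (Tm.shift k s)

/-- Evaluation: `t ⇓ t'` iff `t →_v* t'` and `t'` is a normal form. -/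
def Evals (t t' : Tm) : Prop := Relation.ReflTransGen Red t t' ∧ NormalForm t'

/-- `t` evaluates to some value. -/
def EvalsToValue (t : Tm) : Prop := ∃ v, Relation.ReflTransGen Red t v ∧ IsValue v

/-- `t` evaluates to some control-stuck term. -/
def EvalsToStuck (t : Tm) : Prop :=
  ∃ s, Relation.ReflTransGen Red t s ∧ ControlStuck s

/-- General contexts C ::= □ | λx.C | t C | C t | S k.C | ⟨C⟩. -/
inductive Ctx : Type
  | hole : Ctx
  | lam : ℕ → Ctx → Ctx
  | appL : Ctx → Tm → Ctx
  | appR : Tm → Ctx → Ctx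
  | shift : ℕ → Ctx → Ctx
  | reset : Ctx → Ctx

def Ctx.plug : Ctx → Tm → Tm
  | .hole, t => t
  | .lam x C, t => Tm.lam x (C.plug t)
  | .appL C u, t => Tm.app (C.plug t) u
  | .appR u C, t => Tm.app u (C.plug t)
  | .shift k C, t => Tm.shift k (C.plug t)
  | .reset C, t => Tm.reset (C.plug t)

def Ctx.fv : Ctx → Finset ℕ
  | .hole => ∅
  | .lam x C => C.fv \ {x}
  | .appL C u => C.fv ∪ u.fv
  | .appR u C => u.fv ∪ C.fv
  | .shift k C => C.fv \ {k}
  | .reset C => C.fv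

/-- Contextual equivalence ≈ for the relaxed semantics (on closed terms):
tests evaluation to values and evaluation to control-stuck terms in every
closed context. -/
def CtxEquiv (t0 t1 : Tm) : Prop :=
  ∀ C : Ctx, C.fv = ∅ →
    (EvalsToValue (C.plug t0) ↔ EvalsToValue (C.plug t1)) ∧
    (EvalsToStuck (C.plug t0) ↔ EvalsToStuck (C.plug t1))

/-- Contextual equivalence ≈_p for the original semantics: tests evaluation to
values of ⟨C[·]⟩ in every closed context C. -/
def CtxEquivP (t0 t1 : Tm) : Prop :=
  ∀ C : Ctx, C.fv = ∅ →
    (EvalsToValue (Tm.reset (C.plug t0)) ↔ EvalsToValue (Tm.reset (C.plug t1)))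

/-- Contextual equivalence ≈_E testing only with closed evaluation contexts. -/
def ECtxEquiv (t0 t1 : Tm) : Prop :=
  ∀ F : FCtx, F.fv = ∅ →
    (EvalsToValue (F.plug t0) ↔ EvalsToValue (F.plug t1)) ∧
    (EvalsToStuck (F.plug t0) ↔ EvalsToStuck (F.plug t1))

/-- Applicative simulation. -/
def IsAppSim (R : Tm → Tm → Prop) : Prop :=
  ∀ t0 t1, R t0 t1 →
    (∀ t0', Red t0 t0' →
      ∃ t1', Relation.ReflTransGen Red t1 t1' ∧ R t0' t1') ∧
    (∀ x t0', t0 = Tm.lam x t0' →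
      ∃ t1', Relation.ReflTransGen Red t1 (Tm.lam x t1') ∧
        ∀ v, IsValue v → Closed v → R (t0'.subst x v) (t1'.subst x v)) ∧
    (∀ (E0 : ECtx) (k : ℕ) (t0' : Tm), t0 = E0.plug (Tm.shift k t0') →
      ∃ (E1 : ECtx) (t1' : Tm),
        Relation.ReflTransGen Red t1 (E1.plug (Tm.shift k t1')) ∧
        ∀ E : ECtx, E.fv = ∅ →
          R (Tm.reset (t0'.subst k (contFun (E.comp E0))))
            (Tm.reset (t1'.subst k (contFun (E.comp E1)))))

/-- Applicative bisimulation. -/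
def IsAppBisim (R : Tm → Tm → Prop) : Prop :=
  IsAppSim R ∧ IsAppSim (fun a b => R b a)

/-- Applicative bisimilarity ≈_app: the largest applicative bisimulation. -/
def AppBisim (t0 t1 : Tm) : Prop := ∃ R, IsAppBisim R ∧ R t0 t1

/-- Simultaneous substitution (used only with closing substitutions mapping
variables to closed values, so no capture can occur). -/
def Tm.msubst : Tm → (ℕ → Tm) → Tm
  | .var x, σ => σ x
  | .lam x t, σ => Tm.lam x (t.msubst (Function.update σ x (Tm.var x)))
  | .app t u, σ => Tm.app (t.msubst σ) (u.msubst σ)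
  | .shift k t, σ => Tm.shift k (t.msubst (Function.update σ k (Tm.var k)))
  | .reset t, σ => Tm.reset (t.msubst σ)

/-- Open extension of a relation on closed terms: relate `t0σ` and `t1σ` for
every substitution σ mapping variables to closed values. -/
def OpenExt (R : Tm → Tm → Prop) (t0 t1 : Tm) : Prop :=
  ∀ σ : ℕ → Tm, (∀ x, IsValue (σ x) ∧ Closed (σ x)) →
    R (t0.msubst σ) (t1.msubst σ)

/-- ω := λx.x x. -/
def omegaTm : Tm := Tm.lam 0 (Tm.app (Tm.var 0) (Tm.var 0))

/-- Ω := ω ω, a diverging term. -/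
def OmegaTm : Tm := Tm.app omegaTm omegaTm


/-- θ := λx.λy. y (λz. x x y z). -/
def thetaTm : Tm :=
  Tm.lam 0 (Tm.lam 1 (Tm.app (Tm.var 1)
    (Tm.lam 2 (Tm.app (Tm.app (Tm.app (Tm.var 0) (Tm.var 0)) (Tm.var 1)) (Tm.var 2)))))

/-- Θ := θ θ, Turing's call-by-value fixed-point combinator. -/
def ThetaTm : Tm := Tm.app thetaTm thetaTm

/-- δ_x := λy. x (λz. y y z), with x the variable 0. -/
def deltaTm : Tm :=
  Tm.lam 1 (Tm.app (Tm.var 0)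
    (Tm.lam 2 (Tm.app (Tm.app (Tm.var 1) (Tm.var 1)) (Tm.var 2))))

/-- Δ := λx. δ_x δ_x, Curry's call-by-value fixed-point combinator. -/
def DeltaTm : Tm := Tm.lam 0 (Tm.app deltaTm deltaTm)

/-! ### Proof -/

def ThetaP : Tm := Tm.lam 1 (Tm.app (Tm.var 1)
    (Tm.lam 2 (Tm.app (Tm.app (Tm.app thetaTm thetaTm) (Tm.var 1)) (Tm.var 2))))

def dl (v : Tm) : Tm := Tm.lam 1 (Tm.app v
    (Tm.lam 2 (Tm.app (Tm.app (Tm.var 1) (Tm.var 1)) (Tm.var 2))))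

theorem subst_notin (t : Tm) (x : ℕ) (v : Tm) (hv : v.fv = ∅) (hx : x ∉ t.fv) :
    t.subst x v = t := by
  induction t with
  | var w =>
    simp only [Tm.fv, Finset.mem_singleton] at hx
    rw [Tm.subst, if_neg (fun h => hx h.symm)]
  | lam y t ih =>
    rw [Tm.subst, hv]
    by_cases h : y = x
    · simp [h]
    · have : x ∉ t.fv := fun h' => hx (by simp [Tm.fv, h', Ne.symm h])
      simp [h, ih this]
  | app t u iht ihu =>
    simp only [Tm.fv, Finset.mem_union, not_or] at hx
    rw [Tm.subst, iht hx.1, ihu hx.2]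
  | shift y t ih =>
    rw [Tm.subst, hv]
    by_cases h : y = x
    · simp [h]
    · have : x ∉ t.fv := fun h' => hx (by simp [Tm.fv, h', Ne.symm h])
      simp [h, ih this]
  | reset t ih => rw [Tm.subst, ih hx]

theorem subst_closed (t : Tm) (x : ℕ) (v : Tm) (hv : v.fv = ∅) (ht : t.fv = ∅) :
    t.subst x v = t := subst_notin t x v hv (by simp [ht])

theorem fv_subst (t : Tm) (x : ℕ) (v : Tm) (hv : v.fv = ∅) :
    (t.subst x v).fv ⊆ t.fv \ {x} := by
  induction t with
  | var w =>
    rw [Tm.subst]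
    split
    · simp [hv]
    · rename_i h
      simp [Tm.fv, h]
  | lam y t ih =>
    rw [Tm.subst, hv]
    by_cases h : y = x
    · simp [h, Tm.fv]
    · simp only [h, if_false, Finset.notMem_empty, Tm.fv]
      intro a ha
      simp only [Finset.mem_sdiff] at ha ⊢
      have := ih ha.1
      simp only [Finset.mem_sdiff] at this
      tauto
  | app t u iht ihu =>
    rw [Tm.subst]
    intro a ha
    simp only [Tm.fv, Finset.mem_union, Finset.mem_sdiff] at ha ⊢
    rcases ha with ha | ha
    · have := iht ha
      simp only [Finset.mem_sdiff] at this
      tauto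
    · have := ihu ha
      simp only [Finset.mem_sdiff] at this
      tauto
  | shift y t ih =>
    rw [Tm.subst, hv]
    by_cases h : y = x
    · simp [h, Tm.fv]
    · simp only [h, if_false, Finset.notMem_empty, Tm.fv]
      intro a ha
      simp only [Finset.mem_sdiff] at ha ⊢
      have := ih ha.1
      simp only [Finset.mem_sdiff] at this
      tauto
  | reset t ih => rw [Tm.subst]; exact ih

theorem fv_subst_closed {t : Tm} {x : ℕ} {v : Tm} (hv : v.fv = ∅)
    (h : t.fv \ {x} = ∅) : (t.subst x v).fv = ∅ := by
  have := fv_subst t x v hv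
  rw [h] at this
  exact Finset.subset_empty.mp this

theorem fv_eplug (E : ECtx) (t : Tm) : (E.plug t).fv = E.fv ∪ t.fv := by
  induction E with
  | hole => simp [ECtx.plug, ECtx.fv]
  | appR v hv E ih => simp [ECtx.plug, ECtx.fv, Tm.fv, ih, Finset.union_assoc]
  | appL E u ih =>
    simp only [ECtx.plug, ECtx.fv, Tm.fv, ih]
    exact Finset.union_right_comm _ _ _

theorem contFun_closed {E : ECtx} (h : E.fv = ∅) : (contFun E).fv = ∅ := by
  simp [contFun, Tm.fv, fv_eplug, h]

/-- Structural presentation of reduction. -/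
inductive Step : Tm → Tm → Prop
  | beta (x : ℕ) (t v : Tm) : IsValue v → Step (Tm.app (Tm.lam x t) v) (t.subst x v)
  | capture (E : ECtx) (k : ℕ) (t : Tm) :
      Step (Tm.reset (E.plug (Tm.shift k t))) (Tm.reset (t.subst k (contFun E)))
  | resetVal (v : Tm) : IsValue v → Step (Tm.reset v) v
  | appL (t t' u : Tm) : Step t t' → Step (Tm.app t u) (Tm.app t' u)
  | appR (v t t' : Tm) : IsValue v → Step t t' → Step (Tm.app v t) (Tm.app v t')
  | reset (t t' : Tm) : Step t t' → Step (Tm.reset t) (Tm.reset t')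

theorem Step.plug (F : FCtx) {t t' : Tm} (h : Step t t') : Step (F.plug t) (F.plug t') := by
  induction F with
  | hole => exact h
  | appR v hv F ih => exact Step.appR _ _ _ hv ih
  | appL F u ih => exact Step.appL _ _ _ ih
  | reset F ih => exact Step.reset _ _ ih

theorem Step.of_red {t t' : Tm} (h : Red t t') : Step t t' := by
  cases h with
  | beta F x t v hv => exact Step.plug F (Step.beta x t v hv)
  | capture F E k t => exact Step.plug F (Step.capture E k t)
  | resetVal F v hv => exact Step.plug F (Step.resetVal v hv)

theorem Step.to_red {t t' : Tm} (h : Step t t') : Red t t' := by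
  induction h with
  | beta x t v hv => exact Red.beta .hole x t v hv
  | capture E k t => exact Red.capture .hole E k t
  | resetVal v hv => exact Red.resetVal .hole v hv
  | appL t t' u _ ih =>
    cases ih with
    | beta F x t v hv => exact Red.beta (.appL F u) x t v hv
    | capture F E k t => exact Red.capture (.appL F u) E k t
    | resetVal F v hv => exact Red.resetVal (.appL F u) v hv
  | appR w t t' hw _ ih =>
    cases ih with
    | beta F x t v hv => exact Red.beta (.appR w hw F) x t v hv
    | capture F E k t => exact Red.capture (.appR w hw F) E k t
    | resetVal F v hv => exact Red.resetVal (.appR w hw F) v hv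
  | reset t t' _ ih =>
    cases ih with
    | beta F x t v hv => exact Red.beta (.reset F) x t v hv
    | capture F E k t => exact Red.capture (.reset F) E k t
    | resetVal F v hv => exact Red.resetVal (.reset F) v hv

theorem red_eq_step : Red = Step := by
  funext a b
  exact propext ⟨Step.of_red, Step.to_red⟩

abbrev Steps : Tm → Tm → Prop := Relation.ReflTransGen Step

theorem Steps.appL {t t' : Tm} (u : Tm) (h : Steps t t') :
    Steps (Tm.app t u) (Tm.app t' u) := by
  induction h with
  | refl => exact .refl
  | tail _ h ih => exact ih.tail (Step.appL _ _ _ h)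

theorem Steps.appR {v t t' : Tm} (hv : IsValue v) (h : Steps t t') :
    Steps (Tm.app v t) (Tm.app v t') := by
  induction h with
  | refl => exact .refl
  | tail _ h ih => exact ih.tail (Step.appR _ _ _ hv h)

theorem Steps.reset {t t' : Tm} (h : Steps t t') :
    Steps (Tm.reset t) (Tm.reset t') := by
  induction h with
  | refl => exact .refl
  | tail _ h ih => exact ih.tail (Step.reset _ _ h)

theorem Step.closed {t t' : Tm} (h : Step t t') (ht : t.fv = ∅) : t'.fv = ∅ := by
  induction h with
  | beta x t v hv =>
    simp only [Tm.fv, Finset.union_eq_empty] at ht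
    exact fv_subst_closed ht.2 ht.1
  | capture E k t =>
    simp only [Tm.fv, fv_eplug, Finset.union_eq_empty] at ht
    exact fv_subst_closed (contFun_closed ht.1) ht.2
  | resetVal v hv => exact ht
  | appL t t' u _ ih =>
    simp only [Tm.fv, Finset.union_eq_empty] at ht ⊢
    exact ⟨ih ht.1, ht.2⟩
  | appR v t t' hv _ ih =>
    simp only [Tm.fv, Finset.union_eq_empty] at ht ⊢
    exact ⟨ht.1, ih ht.2⟩
  | reset t t' _ ih => exact ih ht

theorem Steps.closed {t t' : Tm} (h : Steps t t') (ht : t.fv = ∅) : t'.fv = ∅ := by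
  induction h with
  | refl => exact ht
  | tail _ h ih => exact h.closed ih

/-- The candidate relation. -/
inductive Rl : Tm → Tm → Prop
  | var (x : ℕ) : Rl (.var x) (.var x)
  | lam (x : ℕ) (t u : Tm) : Rl t u → Rl (.lam x t) (.lam x u)
  | app (t u t' u' : Tm) : Rl t u → Rl t' u' → Rl (.app t t') (.app u u')
  | shift (x : ℕ) (t u : Tm) : Rl t u → Rl (.shift x t) (.shift x u)
  | reset (t u : Tm) : Rl t u → Rl (.reset t) (.reset u)
  | r1 : Rl (.app thetaTm thetaTm) DeltaTm
  | r2 : Rl ThetaP DeltaTm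
  | r3 (v w : Tm) : IsValue v → IsValue w → v.fv = ∅ → w.fv = ∅ → Rl v w →
      Rl (.app (.app thetaTm thetaTm) v) (.app (dl w) (dl w))
  | r4 (v w : Tm) : IsValue v → IsValue w → v.fv = ∅ → w.fv = ∅ → Rl v w →
      Rl (.app ThetaP v) (.app (dl w) (dl w))

theorem Rl.rfl' (t : Tm) : Rl t t := by
  induction t with
  | var x => exact .var x
  | lam x t ih => exact .lam _ _ _ ih
  | app t u h1 h2 => exact .app _ _ _ _ h1 h2
  | shift x t ih => exact .shift _ _ _ ih
  | reset t ih => exact .reset _ _ ih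

theorem theta_closed : thetaTm.fv = ∅ := by decide
theorem thetaP_closed : ThetaP.fv = ∅ := by decide
theorem delta_closed : DeltaTm.fv = ∅ := by decide
theorem dl_closed {v : Tm} (h : v.fv = ∅) : (dl v).fv = ∅ := by
  simp only [dl, Tm.fv, h]; decide

theorem Rl.subst {t u : Tm} (h : Rl t u) (x : ℕ) {v w : Tm} (hv : v.fv = ∅) (hw : w.fv = ∅)
    (hvw : Rl v w) : Rl (t.subst x v) (u.subst x w) := by
  induction h with
  | var y =>
    rw [Tm.subst, Tm.subst]
    split
    · exact hvw
    · exact .var y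
  | lam y t u h ih =>
    rw [Tm.subst, Tm.subst, hv, hw]
    by_cases hy : y = x
    · simpa [hy] using Rl.lam x t u h
    · simpa [hy] using Rl.lam y _ _ ih
  | app t u t' u' _ _ h1 h2 =>
    rw [Tm.subst, Tm.subst]
    exact .app _ _ _ _ h1 h2
  | shift y t u h ih =>
    rw [Tm.subst, Tm.subst, hv, hw]
    by_cases hy : y = x
    · simpa [hy] using Rl.shift x t u h
    · simpa [hy] using Rl.shift y _ _ ih
  | reset t u h ih =>
    rw [Tm.subst, Tm.subst]
    exact .reset _ _ ih
  | r1 =>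
    rw [subst_closed _ _ _ hv (by simp [Tm.fv, theta_closed]), subst_closed _ _ _ hw delta_closed]
    exact .r1
  | r2 =>
    rw [subst_closed _ _ _ hv thetaP_closed, subst_closed _ _ _ hw delta_closed]
    exact .r2
  | r3 a b ha hb hac hbc hab =>
    rw [subst_closed _ _ _ hv (by simp [Tm.fv, theta_closed, hac]),
      subst_closed _ _ _ hw (by simp [Tm.fv, dl_closed hbc])]
    exact .r3 a b ha hb hac hbc hab
  | r4 a b ha hb hac hbc hab =>
    rw [subst_closed _ _ _ hv (by simp [Tm.fv, thetaP_closed, hac]),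
      subst_closed _ _ _ hw (by simp [Tm.fv, dl_closed hbc])]
    exact .r4 a b ha hb hac hbc hab

theorem thetaP_val : IsValue ThetaP := .lam _ _

theorem step_theta : Step (.app thetaTm thetaTm) ThetaP := by
  have h := Step.beta 0 (Tm.lam 1 (Tm.app (Tm.var 1)
    (Tm.lam 2 (Tm.app (Tm.app (Tm.app (Tm.var 0) (Tm.var 0)) (Tm.var 1)) (Tm.var 2)))))
    thetaTm (.lam _ _)
  have e : (Tm.lam 1 (Tm.app (Tm.var 1)
    (Tm.lam 2 (Tm.app (Tm.app (Tm.app (Tm.var 0) (Tm.var 0)) (Tm.var 1)) (Tm.var 2))))).subst 0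
      thetaTm = ThetaP := by
    simp [Tm.subst, theta_closed, ThetaP]
  rw [e] at h
  exact h

theorem substP {v : Tm} (hv : v.fv = ∅) : (Tm.app (Tm.var 1)
    (Tm.lam 2 (Tm.app (Tm.app (Tm.app thetaTm thetaTm) (Tm.var 1)) (Tm.var 2)))).subst 1 v
    = .app v (.lam 2 (.app (.app (.app thetaTm thetaTm) v) (.var 2))) := by
  simp [Tm.subst, hv, subst_closed _ _ _ hv theta_closed]

theorem step_thetaP {v : Tm} (h : IsValue v) (hv : v.fv = ∅) : Step (.app ThetaP v)
    (.app v (.lam 2 (.app (.app (.app thetaTm thetaTm) v) (.var 2)))) := by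
  have := Step.beta 1 (Tm.app (Tm.var 1)
    (Tm.lam 2 (Tm.app (Tm.app (Tm.app thetaTm thetaTm) (Tm.var 1)) (Tm.var 2)))) v h
  rw [substP hv] at this
  exact this

theorem substD {v : Tm} (hv : v.fv = ∅) :
    (Tm.app deltaTm deltaTm).subst 0 v = .app (dl v) (dl v) := by
  simp [Tm.subst, hv, deltaTm, dl]

theorem step_Delta {v : Tm} (h : IsValue v) (hv : v.fv = ∅) : Step (.app DeltaTm v)
    (.app (dl v) (dl v)) := by
  have := Step.beta 0 (Tm.app deltaTm deltaTm) v h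
  rw [substD hv] at this
  exact this

theorem substd {v : Tm} (hv : v.fv = ∅) : (Tm.app v
    (Tm.lam 2 (Tm.app (Tm.app (Tm.var 1) (Tm.var 1)) (Tm.var 2)))).subst 1 (dl v)
    = .app v (.lam 2 (.app (.app (dl v) (dl v)) (.var 2))) := by
  simp [Tm.subst, dl_closed hv, subst_closed _ _ _ (dl_closed hv) hv]

theorem step_dl {v : Tm} (hv : v.fv = ∅) : Step (.app (dl v) (dl v))
    (.app v (.lam 2 (.app (.app (dl v) (dl v)) (.var 2)))) := by
  have := Step.beta 1 (Tm.app v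
    (Tm.lam 2 (Tm.app (Tm.app (Tm.var 1) (Tm.var 1)) (Tm.var 2)))) (dl v) (.lam _ _)
  rw [substd hv] at this
  exact this

theorem rl_unfold {v w : Tm} (h1 : IsValue v) (h2 : IsValue w) (h3 : v.fv = ∅) (h4 : w.fv = ∅)
    (h : Rl v w) : Rl (.app v (.lam 2 (.app (.app (.app thetaTm thetaTm) v) (.var 2))))
      (.app w (.lam 2 (.app (.app (dl w) (dl w)) (.var 2)))) :=
  .app _ _ _ _ h (.lam _ _ _ (.app _ _ _ _ (.r3 v w h1 h2 h3 h4 h) (.var 2)))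

theorem no_step_val {v t : Tm} (hv : IsValue v) (h : Step v t) : False := by
  cases hv <;> cases h

theorem eplug_shift_not_val {E : ECtx} {k : ℕ} {s : Tm} (h : IsValue (E.plug (.shift k s))) :
    False := by
  cases E <;> simp only [ECtx.plug] at h <;> cases h

/-- An application of two values is not control stuck. -/
theorem app_val_not_stuck {v w : Tm} (hv : IsValue v) (hw : IsValue w) {E : ECtx} {k : ℕ} {s : Tm}
    (h : E.plug (.shift k s) = .app v w) : False := by
  cases E with
  | hole => simp [ECtx.plug] at h
  | appR a ha E =>
    simp only [ECtx.plug, Tm.app.injEq] at h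
    exact eplug_shift_not_val (h.2 ▸ hw)
  | appL E a =>
    simp only [ECtx.plug, Tm.app.injEq] at h
    exact eplug_shift_not_val (h.1 ▸ hv)

theorem step_theta_inv {t : Tm} (h : Step (.app thetaTm thetaTm) t) : t = ThetaP := by
  have e : ∀ a b c, Tm.app thetaTm thetaTm = Tm.app (Tm.lam a b) c →
      b.subst a c = ThetaP := by
    rintro a b c h
    simp only [thetaTm, Tm.app.injEq, Tm.lam.injEq] at h
    obtain ⟨⟨rfl, rfl⟩, rfl⟩ := h
    have := theta_closed
    simp only [thetaTm] at this
    simp [Tm.subst, ThetaP, thetaTm, this]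
  generalize ht : Tm.app thetaTm thetaTm = t0 at h
  cases h with
  | beta x b v hv => exact e _ _ _ ht
  | appL a a' u h =>
    cases ht
    exact (no_step_val (.lam _ _) h).elim
  | appR v a a' hv h =>
    cases ht
    exact (no_step_val (.lam _ _) h).elim
  | capture => cases ht
  | resetVal => cases ht
  | reset => cases ht

theorem Rl.val_left {t u : Tm} (h : Rl t u) (ht : IsValue t) : IsValue u := by
  cases h <;> first | exact .var _ | exact .lam _ _ | cases ht

theorem Rl.val_right {t u : Tm} (h : Rl t u) (hu : IsValue u) :
    ∃ t', Steps t t' ∧ IsValue t' ∧ Rl t' u := by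
  cases h with
  | var x => exact ⟨_, .refl, .var x, .var x⟩
  | lam x t u h => exact ⟨_, .refl, .lam _ _, .lam _ _ _ h⟩
  | r1 => exact ⟨_, .single step_theta, thetaP_val, .r2⟩
  | r2 => exact ⟨_, .refl, thetaP_val, .r2⟩
  | app => cases hu
  | shift => cases hu
  | reset => cases hu
  | r3 => cases hu
  | r4 => cases hu

/-- Related pure contexts. -/
inductive RlE : ECtx → ECtx → Prop
  | hole : RlE .hole .hole
  | appR (v w : Tm) (hv : IsValue v) (hw : IsValue w) (E E' : ECtx) :
      Rl v w → RlE E E' → RlE (.appR v hv E) (.appR w hw E')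
  | appL (t u : Tm) (E E' : ECtx) : RlE E E' → Rl t u → RlE (.appL E t) (.appL E' u)

theorem RlE.plug {E E' : ECtx} (h : RlE E E') {t u : Tm} (ht : Rl t u) :
    Rl (E.plug t) (E'.plug u) := by
  induction h with
  | hole => exact ht
  | appR v w hv hw E E' h _ ih => exact .app _ _ _ _ h ih
  | appL t u E E' _ h ih => exact .app _ _ _ _ ih h

theorem RlE.cont {E E' : ECtx} (h : RlE E E') (h1 : E.fv = ∅) (h2 : E'.fv = ∅) :
    Rl (contFun E) (contFun E') := by
  unfold contFun
  rw [h1, h2]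
  exact .lam _ _ _ (.reset _ _ (h.plug (.var _)))

theorem stuck_left (E : ECtx) (k : ℕ) (s u : Tm) (h : Rl (E.plug (.shift k s)) u) :
    ∃ E' s', u = E'.plug (.shift k s') ∧ RlE E E' ∧ Rl s s' := by
  generalize ht : E.plug (.shift k s) = t at h
  induction E generalizing t u with
  | hole =>
    subst ht
    cases h with
    | shift _ _ s' h => exact ⟨.hole, s', rfl, .hole, h⟩
  | appR v hv E ih =>
    cases h with
    | app a b a' b' h1 h2 =>
      simp only [ECtx.plug, Tm.app.injEq] at ht
      obtain ⟨rfl, ht⟩ := ht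
      obtain ⟨E', s', rfl, hE, hs⟩ := ih _ _ ht h2
      exact ⟨.appR b (h1.val_left hv) E', s', rfl, .appR _ _ _ _ _ _ h1 hE, hs⟩
    | r1 => exact (app_val_not_stuck (.lam _ _) (.lam _ _) ht).elim
    | r4 a b ha hb => exact (app_val_not_stuck (.lam _ _) ha ht).elim
    | r3 a b ha hb =>
      simp only [ECtx.plug, Tm.app.injEq] at ht
      rw [ht.1] at hv
      cases hv
    | _ => cases ht
  | appL E a ih =>
    cases h with
    | app a b a' b' h1 h2 =>
      simp only [ECtx.plug, Tm.app.injEq] at ht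
      obtain ⟨ht, rfl⟩ := ht
      obtain ⟨E', s', rfl, hE, hs⟩ := ih _ _ ht h1
      exact ⟨.appL E' b', s', rfl, .appL _ _ _ _ hE h2, hs⟩
    | r1 => exact (app_val_not_stuck (.lam _ _) (.lam _ _) ht).elim
    | r4 a b ha hb => exact (app_val_not_stuck (.lam _ _) ha ht).elim
    | r3 a b ha hb =>
      simp only [ECtx.plug, Tm.app.injEq] at ht
      exact (app_val_not_stuck (.lam _ _) (.lam _ _) ht.1).elim
    | _ => cases ht

theorem stuck_right (E' : ECtx) (k : ℕ) (s' t : Tm) (h : Rl t (E'.plug (.shift k s'))) :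
    ∃ E s, Steps t (E.plug (.shift k s)) ∧ RlE E E' ∧ Rl s s' := by
  generalize hu : E'.plug (.shift k s') = u at h
  induction E' generalizing t u with
  | hole =>
    subst hu
    cases h with
    | shift _ s _ h => exact ⟨.hole, s, .refl, .hole, h⟩
  | appR v hv E ih =>
    cases h with
    | app a b a' b' h1 h2 =>
      simp only [ECtx.plug, Tm.app.injEq] at hu
      obtain ⟨rfl, hu⟩ := hu
      obtain ⟨a1, hs1, hv1, hr1⟩ := h1.val_right hv
      obtain ⟨E', s', hst, hE, hs⟩ := ih _ _ hu h2
      exact ⟨.appR a1 hv1 E', s', (hs1.appL _).trans (hst.appR hv1),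
        .appR _ _ _ _ _ _ hr1 hE, hs⟩
    | r3 => exact (app_val_not_stuck (.lam _ _) (.lam _ _) hu).elim
    | r4 => exact (app_val_not_stuck (.lam _ _) (.lam _ _) hu).elim
    | _ => cases hu
  | appL E a ih =>
    cases h with
    | app a b a' b' h1 h2 =>
      simp only [ECtx.plug, Tm.app.injEq] at hu
      obtain ⟨hu, rfl⟩ := hu
      obtain ⟨E', s', hst, hE, hs⟩ := ih _ _ hu h1
      exact ⟨.appL E' a', s', hst.appL _, .appL _ _ _ _ hE h2, hs⟩
    | r3 => exact (app_val_not_stuck (.lam _ _) (.lam _ _) hu).elim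
    | r4 => exact (app_val_not_stuck (.lam _ _) (.lam _ _) hu).elim
    | _ => cases hu

theorem sim_left {t t' : Tm} (hs : Step t t') : ∀ {u : Tm}, Rl t u → t.fv = ∅ → u.fv = ∅ →
    ∃ u', Steps u u' ∧ Rl t' u' := by
  induction hs with
  | beta x b v hv =>
    intro u h ht hu
    generalize he : Tm.app (Tm.lam x b) v = t at h
    cases h with
    | app a u1 a' u2 h1 h2 =>
      cases he
      simp only [Tm.fv, Finset.union_eq_empty] at ht hu
      have hv2 := h2.val_left hv
      generalize he : Tm.lam x b = l at h1
      cases h1 with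
      | lam y c d h1 =>
        cases he
        exact ⟨_, .single (.beta _ _ _ hv2), h1.subst _ ht.2 hu.2 h2⟩
      | r2 =>
        cases he
        rw [substP ht.2]
        exact ⟨_, (Relation.ReflTransGen.single (step_Delta hv2 hu.2)).tail (step_dl hu.2),
          rl_unfold hv hv2 ht.2 hu.2 h2⟩
      | _ => cases he
    | r1 =>
      have := step_theta_inv (he ▸ Step.beta x b v hv)
      rw [this]
      exact ⟨_, .refl, .r2⟩
    | r3 => cases he
    | r4 a w ha hw hac hwc haw =>
      cases he
      rw [substP hac]
      exact ⟨_, .single (step_dl hwc), rl_unfold ha hw hac hwc haw⟩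
    | _ => cases he
  | capture E k s =>
    intro u h ht hu
    cases h with
    | reset _ u h =>
      obtain ⟨E', s', rfl, hE, hs⟩ := stuck_left _ _ _ _ h
      simp only [Tm.fv, fv_eplug, Finset.union_eq_empty] at ht hu
      exact ⟨_, .single (.capture E' k s'), .reset _ _ (hs.subst _ (contFun_closed ht.1)
        (contFun_closed hu.1) (hE.cont ht.1 hu.1))⟩
  | resetVal v hv =>
    intro u h ht hu
    cases h with
    | reset _ u h => exact ⟨_, .single (.resetVal _ (h.val_left hv)), h⟩
  | appL a a' b hs ih =>
    intro u h ht hu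
    cases h with
    | app _ u1 _ u2 h1 h2 =>
      simp only [Tm.fv, Finset.union_eq_empty] at ht hu
      obtain ⟨u', h3, h4⟩ := ih h1 ht.1 hu.1
      exact ⟨_, h3.appL _, .app _ _ _ _ h4 h2⟩
    | r1 => exact (no_step_val (.lam _ _) hs).elim
    | r3 _ w ha hw hac hwc haw =>
      rw [step_theta_inv hs]
      exact ⟨_, .refl, .r4 _ w ha hw hac hwc haw⟩
    | r4 => exact (no_step_val thetaP_val hs).elim
  | appR v a a' hv hs ih =>
    intro u h ht hu
    cases h with
    | app _ u1 _ u2 h1 h2 =>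
      simp only [Tm.fv, Finset.union_eq_empty] at ht hu
      obtain ⟨u', h3, h4⟩ := ih h2 ht.2 hu.2
      exact ⟨_, h3.appR (h1.val_left hv), .app _ _ _ _ h1 h4⟩
    | r1 => exact (no_step_val (.lam _ _) hs).elim
    | r3 _ w ha hw hac hwc haw => exact (no_step_val ha hs).elim
    | r4 _ w ha hw hac hwc haw => exact (no_step_val ha hs).elim
  | reset a a' hs ih =>
    intro u h ht hu
    cases h with
    | reset _ u h =>
      obtain ⟨u', h3, h4⟩ := ih h ht hu
      exact ⟨_, h3.reset, .reset _ _ h4⟩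

theorem sim_right {u u' : Tm} (hs : Step u u') : ∀ {t : Tm}, Rl t u → t.fv = ∅ → u.fv = ∅ →
    ∃ t', Steps t t' ∧ Rl t' u' := by
  induction hs with
  | beta x b v hv =>
    intro t h ht hu
    generalize he : Tm.app (Tm.lam x b) v = u at h
    cases h with
    | app t1 a t2 a' h1 h2 =>
      cases he
      simp only [Tm.fv, Finset.union_eq_empty] at ht hu
      obtain ⟨t1', hs1, hv1, hr1⟩ := h1.val_right (.lam _ _)
      obtain ⟨t2', hs2, hv2, hr2⟩ := h2.val_right hv
      have hc2 := hs2.closed ht.2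
      have hs := (hs1.appL t2).trans (hs2.appR hv1)
      generalize he : Tm.lam x b = l at hr1
      cases hr1 with
      | lam y c d h1 =>
        cases he
        exact ⟨_, hs.tail (.beta _ _ _ hv2), h1.subst _ hc2 hu.2 hr2⟩
      | r2 =>
        cases he
        rw [substD hu.2]
        exact ⟨_, hs, .r4 _ _ hv2 hv hc2 hu.2 hr2⟩
      | r1 => cases hv1
      | _ => cases he
    | r3 a w ha hw hac hwc haw =>
      cases he
      rw [substd hwc]
      exact ⟨_, (Relation.ReflTransGen.single (Step.appL _ _ _ step_theta)).tail
        (step_thetaP ha hac), rl_unfold ha hw hac hwc haw⟩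
    | r4 a w ha hw hac hwc haw =>
      cases he
      rw [substd hwc]
      exact ⟨_, .single (step_thetaP ha hac), rl_unfold ha hw hac hwc haw⟩
    | _ => cases he
  | capture E' k s' =>
    intro t h ht hu
    cases h with
    | reset t _ h =>
      obtain ⟨E, s, hst, hE, hs⟩ := stuck_right _ _ _ _ h
      have ht := hst.closed ht
      simp only [Tm.fv, fv_eplug, Finset.union_eq_empty] at ht hu
      exact ⟨_, hst.reset.tail (.capture E k s), .reset _ _ (hs.subst _ (contFun_closed ht.1)
        (contFun_closed hu.1) (hE.cont ht.1 hu.1))⟩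
  | resetVal v hv =>
    intro t h ht hu
    cases h with
    | reset t _ h =>
      obtain ⟨t', hs, hv', hr⟩ := h.val_right hv
      exact ⟨_, hs.reset.tail (.resetVal _ hv'), hr⟩
  | appL a a' b hs ih =>
    intro t h ht hu
    cases h with
    | app t1 _ t2 _ h1 h2 =>
      simp only [Tm.fv, Finset.union_eq_empty] at ht hu
      obtain ⟨u', h3, h4⟩ := ih h1 ht.1 hu.1
      exact ⟨_, h3.appL _, .app _ _ _ _ h4 h2⟩
    | r3 => exact (no_step_val (.lam _ _) hs).elim
    | r4 => exact (no_step_val (.lam _ _) hs).elim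
  | appR v a a' hv hs ih =>
    intro t h ht hu
    cases h with
    | app t1 _ t2 _ h1 h2 =>
      simp only [Tm.fv, Finset.union_eq_empty] at ht hu
      obtain ⟨t1', hs1, hv1, hr1⟩ := h1.val_right hv
      obtain ⟨u', h3, h4⟩ := ih h2 ht.2 hu.2
      exact ⟨_, (hs1.appL _).trans (h3.appR hv1), .app _ _ _ _ hr1 h4⟩
    | r3 => exact (no_step_val (.lam _ _) hs).elim
    | r4 => exact (no_step_val (.lam _ _) hs).elim
  | reset a a' hs ih =>
    intro t h ht hu
    cases h with
    | reset t _ h =>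
      obtain ⟨u', h3, h4⟩ := ih h ht hu
      exact ⟨_, h3.reset, .reset _ _ h4⟩

theorem sims_left {t t' u : Tm} (hs : Steps t t') (h : Rl t u) (ht : t.fv = ∅) (hu : u.fv = ∅) :
    ∃ u', Steps u u' ∧ Rl t' u' := by
  induction hs with
  | refl => exact ⟨u, .refl, h⟩
  | tail h1 h2 ih =>
    obtain ⟨u', h3, h4⟩ := ih
    obtain ⟨u'', h5, h6⟩ := sim_left h2 h4 (Steps.closed h1 ht) (h3.closed hu)
    exact ⟨u'', h3.trans h5, h6⟩

theorem sims_right {u u' t : Tm} (hs : Steps u u') (h : Rl t u) (ht : t.fv = ∅) (hu : u.fv = ∅) :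
    ∃ t', Steps t t' ∧ Rl t' u' := by
  induction hs with
  | refl => exact ⟨t, .refl, h⟩
  | tail h1 h2 ih =>
    obtain ⟨u', h3, h4⟩ := ih
    obtain ⟨u'', h5, h6⟩ := sim_right h2 h4 (h3.closed ht) (Steps.closed h1 hu)
    exact ⟨u'', h3.trans h5, h6⟩

theorem rl_ctx (C : Ctx) : Rl (C.plug ThetaTm) (C.plug DeltaTm) := by
  induction C with
  | hole => exact .r1
  | lam x C ih => exact .lam _ _ _ ih
  | appL C u ih => exact .app _ _ _ _ ih (.rfl' u)
  | appR u C ih => exact .app _ _ _ _ (.rfl' u) ih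
  | shift x C ih => exact .shift _ _ _ ih
  | reset C ih => exact .reset _ _ ih

theorem fv_ctx (C : Ctx) {t : Tm} (ht : t.fv = ∅) : (C.plug t).fv = C.fv := by
  induction C <;> simp_all [Ctx.plug, Ctx.fv, Tm.fv]

theorem rl_equiv {t u : Tm} (h : Rl t u) (ht : t.fv = ∅) (hu : u.fv = ∅) :
    (EvalsToValue t ↔ EvalsToValue u) ∧ (EvalsToStuck t ↔ EvalsToStuck u) := by
  unfold EvalsToValue EvalsToStuck
  rw [red_eq_step]
  refine ⟨⟨?_, ?_⟩, ⟨?_, ?_⟩⟩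
  · rintro ⟨v, hs, hv⟩
    obtain ⟨u', h1, h2⟩ := sims_left hs h ht hu
    exact ⟨u', h1, h2.val_left hv⟩
  · rintro ⟨v, hs, hv⟩
    obtain ⟨t', h1, h2⟩ := sims_right hs h ht hu
    obtain ⟨t'', h3, h4, _⟩ := h2.val_right hv
    exact ⟨t'', h1.trans h3, h4⟩
  · rintro ⟨_, hs, E, k, s, rfl⟩
    obtain ⟨u', h1, h2⟩ := sims_left hs h ht hu
    obtain ⟨E', s', rfl, _, _⟩ := stuck_left _ _ _ _ h2
    exact ⟨_, h1, E', k, s', rfl⟩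
  · rintro ⟨_, hs, E, k, s, rfl⟩
    obtain ⟨t', h1, h2⟩ := sims_right hs h ht hu
    obtain ⟨E', s', h3, _, _⟩ := stuck_right _ _ _ _ h2
    exact ⟨_, h1.trans h3, E', k, s', rfl⟩

/-- Turing's and Curry's call-by-value fixed-point combinators are
contextually equivalent in the relaxed semantics. -/
theorem Theta_ctxEquiv_Delta : CtxEquiv ThetaTm DeltaTm := by
  intro C hC
  exact rl_equiv (rl_ctx C)
    (by rw [fv_ctx C (by simp [ThetaTm, Tm.fv, theta_closed]), hC])
    (by rw [fv_ctx C delta_closed, hC])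

end LambdaS
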